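/- For every classifier h ∈ H, the expected target error is bounded by the expected source error plus the determinacy disparity discrepancy plus the ideal joint hypothesis error: e_T(h) ≤ e_S(h) + d_{h,H}(S,T) + λ, where λ = inf_{h′ ∈ H} (e_S(h′) + e_T(h′)). -/

import Mathlib

/-!
The disparity `Gam p q` is the probability that independent draws from `p` and `q` differ, so it
satisfies the triangle inequality on the simplex (`gam_triangle`), and hence so does `dis`
(`dis_triangle`). For every `h' ∈ H`,
`dis T h yT ≤ dis T h h' + dis T h' yT ≤ (dis S h' h + ddd H h S T) + dis T h' yT`,
and `dis S h' h ≤ dis S h' yS + dis S h yS`; the infimum over `h'` gives the bound.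
As `dis` takes values in `[0, 1]`, the supremum defining `ddd` is over a bounded set.
-/

open MeasureTheory

/-- Classifier determinacy disparity Γ(p,q) = ∑_{m≠n} p_m q_n = 1 − ∑_k p_k q_k. -/
noncomputable def Gam {K : ℕ} (p q : Fin K → ℝ) : ℝ := 1 - ∑ k, p k * q k

/-- Membership in the probability simplex Δ_K. -/
def inSimplex {K : ℕ} (p : Fin K → ℝ) : Prop := (∀ k, 0 ≤ p k) ∧ ∑ k, p k = 1

/-- Expected determinacy disparity dis_D(h₁,h₂) = ∫ Γ(h₁(x), h₂(x)) dD(x). -/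
noncomputable def dis {X : Type*} [MeasurableSpace X] {K : ℕ}
    (D : Measure X) (h₁ h₂ : X → Fin K → ℝ) : ℝ :=
  ∫ x, Gam (h₁ x) (h₂ x) ∂D

/-- Determinacy disparity discrepancy d_{h,H}(P,Q) = sup_{h'∈H} (dis_Q(h',h) − dis_P(h',h)). -/
noncomputable def ddd {X : Type*} [MeasurableSpace X] {K : ℕ}
    (H : Set (X → Fin K → ℝ)) (h : X → Fin K → ℝ) (P Q : Measure X) : ℝ :=
  sSup {r | ∃ h' ∈ H, r = dis Q h' h - dis P h' h}

lemma inSimplex.le_one {K : ℕ} {p : Fin K → ℝ} (hp : inSimplex p) (k : Fin K) : p k ≤ 1 := by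
  rw [← hp.2]
  exact Finset.single_le_sum (fun i _ => hp.1 i) (Finset.mem_univ k)

lemma gam_comm {K : ℕ} (p q : Fin K → ℝ) : Gam p q = Gam q p := by
  simp only [Gam, mul_comm]

lemma gam_le_one {K : ℕ} {p q : Fin K → ℝ} (hp : inSimplex p) (hq : inSimplex q) :
    Gam p q ≤ 1 := by
  have h0 : 0 ≤ ∑ k, p k * q k := Finset.sum_nonneg fun k _ => mul_nonneg (hp.1 k) (hq.1 k)
  unfold Gam
  linarith

lemma gam_nonneg {K : ℕ} {p q : Fin K → ℝ} (hp : inSimplex p) (hq : inSimplex q) :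
    0 ≤ Gam p q := by
  have h1 : ∑ k, p k * q k ≤ ∑ k, p k :=
    Finset.sum_le_sum fun k _ => mul_le_of_le_one_right (hp.1 k) (hq.le_one k)
  rw [hp.2] at h1
  unfold Gam
  linarith

/-- After averaging over `r`, the inequality reduces to `0 ≤ (1 - p k) * (1 - q k)` for each `k`,
since `p k * q k ≤ ∑ j, p j * q j`. -/
lemma gam_triangle {K : ℕ} {p q r : Fin K → ℝ} (hp : inSimplex p) (hq : inSimplex q)
    (hr : inSimplex r) : Gam p q ≤ Gam p r + Gam r q := by
  have key : ∑ k, r k * (p k + q k) ≤ ∑ k, r k * (1 + ∑ j, p j * q j) := by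
    refine Finset.sum_le_sum fun k _ => mul_le_mul_of_nonneg_left ?_ (hr.1 k)
    have h1 : p k * q k ≤ ∑ j, p j * q j :=
      Finset.single_le_sum (f := fun j => p j * q j)
        (fun i _ => mul_nonneg (hp.1 i) (hq.1 i)) (Finset.mem_univ k)
    nlinarith [mul_nonneg (sub_nonneg.2 (hp.le_one k)) (sub_nonneg.2 (hq.le_one k))]
  rw [← Finset.sum_mul, hr.2, one_mul] at key
  simp only [mul_add, Finset.sum_add_distrib] at key
  have hc : ∑ k, p k * r k = ∑ k, r k * p k := by simp only [mul_comm]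
  unfold Gam
  linarith

section Dis

variable {X : Type*} [MeasurableSpace X] {K : ℕ} (D : Measure X) {f g k : X → Fin K → ℝ}

lemma integrable_gam [IsProbabilityMeasure D] (hf : Measurable f) (hg : Measurable g) (hfs : ∀ x, inSimplex (f x))
    (hgs : ∀ x, inSimplex (g x)) : Integrable (fun x => Gam (f x) (g x)) D := by
  refine Integrable.of_bound (C := 1) ?_ (Filter.Eventually.of_forall fun x => ?_)
  · unfold Gam
    exact Measurable.aestronglyMeasurable (by fun_prop)
  · rw [Real.norm_of_nonneg (gam_nonneg (hfs x) (hgs x))]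
    exact gam_le_one (hfs x) (hgs x)

lemma dis_comm (f g : X → Fin K → ℝ) : dis D f g = dis D g f := by
  simp only [dis, gam_comm]

lemma dis_nonneg (hfs : ∀ x, inSimplex (f x)) (hgs : ∀ x, inSimplex (g x)) : 0 ≤ dis D f g :=
  integral_nonneg fun x => gam_nonneg (hfs x) (hgs x)

lemma dis_le_one [IsProbabilityMeasure D] (hf : Measurable f) (hg : Measurable g) (hfs : ∀ x, inSimplex (f x))
    (hgs : ∀ x, inSimplex (g x)) : dis D f g ≤ 1 := by
  have h1 : dis D f g ≤ ∫ _, (1 : ℝ) ∂D :=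
    integral_mono (integrable_gam D hf hg hfs hgs) (integrable_const 1)
      fun x => gam_le_one (hfs x) (hgs x)
  simpa using h1

lemma dis_triangle [IsProbabilityMeasure D] (hf : Measurable f) (hg : Measurable g) (hk : Measurable k)
    (hfs : ∀ x, inSimplex (f x)) (hgs : ∀ x, inSimplex (g x)) (hks : ∀ x, inSimplex (k x)) :
    dis D f g ≤ dis D f k + dis D k g := by
  have ifk := integrable_gam D hf hk hfs hks
  have ikg := integrable_gam D hk hg hks hgs
  unfold dis
  rw [← integral_add ifk ikg]
  exact integral_mono (integrable_gam D hf hg hfs hgs) (ifk.add ikg)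
    fun x => gam_triangle (hfs x) (hgs x) (hks x)

end Dis

/-- e_T(h) ≤ e_S(h) + d_{h,H}(S,T) + λ,
where λ = inf_{h'∈H} (e_S(h') + e_T(h')); errors are e_D(h) = dis_D(h, y_D). -/
theorem target_error_bound {X : Type*} [MeasurableSpace X] (K : ℕ) (hK : 1 ≤ K)
    (H : Set (X → Fin K → ℝ)) (hHne : H.Nonempty)
    (hHm : ∀ h' ∈ H, Measurable h') (hHs : ∀ h' ∈ H, ∀ x, inSimplex (h' x))
    (S T : Measure X) [IsProbabilityMeasure S] [IsProbabilityMeasure T]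
    (yS yT : X → Fin K → ℝ) (hyS : Measurable yS) (hyT : Measurable yT)
    (hySs : ∀ x, inSimplex (yS x)) (hyTs : ∀ x, inSimplex (yT x))
    (h : X → Fin K → ℝ) (hh : h ∈ H) :
    dis T h yT ≤ dis S h yS + ddd H h S T +
      sInf {r | ∃ h' ∈ H, r = dis S h' yS + dis T h' yT} := by
  have hinf : dis T h yT - dis S h yS - ddd H h S T ≤
      sInf {r | ∃ h' ∈ H, r = dis S h' yS + dis T h' yT} := by
    refine le_csInf ?_ ?_
    · obtain ⟨h', hh'⟩ := hHne
      exact ⟨_, h', hh', rfl⟩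
    · rintro r ⟨h', hh', rfl⟩
      have hd : dis T h' h - dis S h' h ≤ ddd H h S T := by
        refine le_csSup ⟨1, ?_⟩ ⟨h', hh', rfl⟩
        rintro r ⟨g, hg, rfl⟩
        have h1 := dis_le_one T (hHm g hg) (hHm h hh) (hHs g hg) (hHs h hh)
        have h0 := dis_nonneg S (hHs g hg) (hHs h hh)
        linarith
      have hT := dis_triangle T (hHm h hh) hyT (hHm h' hh') (hHs h hh) hyTs (hHs h' hh')
      have hS := dis_triangle S (hHm h' hh') (hHm h hh) hyS (hHs h' hh') (hHs h hh) hySs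
      rw [dis_comm T h h'] at hT
      rw [dis_comm S yS h] at hS
      linarith
  linarith
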